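/- arXiv:2104.04444 — 8 statements merged into one kernel-verified Lean document; each statement's English description precedes it below -/
import Mathlib

section
/- Let T > 0 and let h : [0,T] × ℝ → ℝ be jointly Lipschitz continuous and satisfy |h(t,x) − h(t,x′)| ≤ |x − x′| for all t ∈ [0,T] and x, x′ ∈ ℝ. Suppose that for almost every (t,x) ∈ (0,T) × ℝ the partial derivatives ∂_t h(t,x) and ∂_x h(t,x) exist and satisfy ∂_t h(t,x) = −(1/2)·(1 − (∂_x h(t,x))²). Then for all t₀ ≥ 0 and t ≥ 0 with t₀ + t ≤ T and all x, x̂ ∈ ℝ one has h(t₀, x̂) + p(t, x − x̂) ≤ h(t₀ + t, x) ≤ h(t₀, x); equivalently, (HL_t h(t₀,·))(x) ≤ h(t₀+t, x) ≤ h(t₀, x), i.e. h satisfies the Hopf–Lax condition. -/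
open MeasureTheory

/-- The (shifted) parabola `p(t,x)`: for `t > 0`, `p(t,x) = -t/2 - x²/(2t)` when `|x| ≤ t`
and `p(t,x) = -|x|` otherwise; also `p(0,x) = -|x|`. -/
noncomputable def parab (t x : ℝ) : ℝ :=
  if 0 < t ∧ |x| ≤ t then -t / 2 - x ^ 2 / (2 * t) else -|x|

/-- One-dimensional comparison: a Lipschitz function with a.e. derivative at least `c`. -/
lemma lip_ge_of_deriv_ge {g : ℝ → ℝ} {K : NNReal} (hg : LipschitzWith K g) {a b c : ℝ}
    (hab : a ≤ b) (hd : ∀ᵐ s : ℝ, s ∈ Set.Ioo a b → c ≤ deriv g s) :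
    c * (b - a) ≤ g b - g a := by
  have hac : AbsolutelyContinuousOnInterval g a b :=
    (hg.lipschitzOnWith (s := Set.uIcc a b)).absolutelyContinuousOnInterval
  rw [← hac.integral_deriv_eq_sub]
  have h1 : c * (b - a) = ∫ _ in a..b, c := by
    simp [mul_comm]
  rw [h1]
  apply intervalIntegral.integral_mono_ae_restrict hab (by simp) hac.intervalIntegrable_deriv
  rw [Filter.EventuallyLE, ae_restrict_iff' measurableSet_Icc]
  have ha : ∀ᵐ s : ℝ, s ≠ a := by simp [ae_iff]
  have hb : ∀ᵐ s : ℝ, s ≠ b := by simp [ae_iff]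
  filter_upwards [hd, ha, hb] with s hs h1 h2 h3
  exact hs ⟨lt_of_le_of_ne h3.1 (Ne.symm h1), lt_of_le_of_ne h3.2 h2⟩

/-- The shear `(y, s) ↦ (s, y + v s)` preserves Lebesgue measure. -/
lemma shear_measurePreserving (v : ℝ) :
    MeasurePreserving (fun q : ℝ × ℝ => (q.2, q.1 + v * q.2)) := by
  have h1 : MeasurePreserving (fun q : ℝ × ℝ => (q.1, q.2 + v * q.1))
      ((volume : Measure ℝ).prod volume) ((volume : Measure ℝ).prod volume) :=
    MeasurePreserving.skew_product (f := fun s : ℝ => s) (g := fun s y : ℝ => y + v * s)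
      (MeasurePreserving.id _)
      (by unfold Function.uncurry; fun_prop)
      (Filter.Eventually.of_forall fun s => (measurePreserving_add_right volume (v * s)).map_eq)
  exact h1.comp Measure.measurePreserving_swap

/-- Comparison along lines of slope `v` for a globally Lipschitz function of two variables. -/
lemma line_ge {G : ℝ × ℝ → ℝ} {K : NNReal} (hG : LipschitzWith K G) {T v c : ℝ}
    (hD : ∀ᵐ p : ℝ × ℝ, p ∈ Set.Ioo (0 : ℝ) T ×ˢ (Set.univ : Set ℝ) →
      ∀ L : ℝ × ℝ →L[ℝ] ℝ, HasFDerivAt G L p → c ≤ L (1, v))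
    {a b : ℝ} (ha : 0 ≤ a) (hab : a ≤ b) (hb : b ≤ T) (y : ℝ) :
    c * (b - a) ≤ G (b, y + v * b) - G (a, y + v * a) := by
  have hdiff : ∀ᵐ p : ℝ × ℝ, DifferentiableAt ℝ G p := hG.ae_differentiableAt
  have hboth := (shear_measurePreserving v).quasiMeasurePreserving.ae (hD.and hdiff)
  have hae : ∀ᵐ y : ℝ, ∀ᵐ s : ℝ, _ := Measure.ae_ae_of_ae_prod hboth
  have hgood : ∀ᵐ y : ℝ, c * (b - a) ≤ G (b, y + v * b) - G (a, y + v * a) := by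
    filter_upwards [hae] with y hy
    have hl : LipschitzWith (K * max 1 (‖v‖₊)) (fun s : ℝ => G (s, y + v * s)) := by
      refine hG.comp (LipschitzWith.prodMk LipschitzWith.id ?_)
      refine LipschitzWith.of_dist_le_mul fun s s' => ?_
      simp only [Real.dist_eq, coe_nnnorm, Real.norm_eq_abs, ← abs_mul]
      apply le_of_eq; congr 1; ring
    refine lip_ge_of_deriv_ge hl hab ?_
    filter_upwards [hy] with s hs hsm
    obtain ⟨h1, h2⟩ := hs
    have h3 := h1 ⟨⟨lt_of_le_of_lt ha hsm.1, lt_of_lt_of_le hsm.2 hb⟩, trivial⟩ _ h2.hasFDerivAt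
    have h4 : HasDerivAt (fun s : ℝ => (s, y + v * s)) ((1 : ℝ), v) s := by
      refine (hasDerivAt_id s).prodMk ?_
      simpa using ((hasDerivAt_id s).const_mul v).const_add y
    have h5 := h2.hasFDerivAt.comp_hasDerivAt s h4
    have h6 : deriv (fun s : ℝ => G (s, y + v * s)) s = fderiv ℝ G (s, y + v * s) (1, v) :=
      h5.deriv
    rw [h6]; exact h3
  have hdense := Measure.dense_of_ae hgood
  have hcl : IsClosed {y : ℝ | c * (b - a) ≤ G (b, y + v * b) - G (a, y + v * a)} := by
    have := hG.continuous
    exact isClosed_le (by fun_prop) (by fun_prop)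
  have := hdense.closure_eq
  rw [hcl.closure_eq] at this
  exact Set.eq_univ_iff_forall.mp this y

/-- Every jointly Lipschitz function `h` on `[0,T] × ℝ` that is `1`-Lipschitz in space and
solves `∂ₜ h = -(1/2)(1 - (∂ₓ h)²)` almost everywhere on `(0,T) × ℝ` satisfies the
Hopf–Lax condition. -/
theorem weak_solution_satisfies_hopfLax_condition
    (T : ℝ) (hT : 0 < T) (h : ℝ → ℝ → ℝ)
    (hLip : ∃ K : NNReal, LipschitzOnWith K (fun p : ℝ × ℝ => h p.1 p.2)
      (Set.Icc 0 T ×ˢ Set.univ))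
    (hSpace : ∀ t ∈ Set.Icc (0 : ℝ) T, LipschitzWith 1 (h t))
    (hPDE : ∀ᵐ p : ℝ × ℝ, p ∈ Set.Ioo (0 : ℝ) T ×ˢ (Set.univ : Set ℝ) →
      ∃ dt dx : ℝ, HasDerivAt (fun s => h s p.2) dt p.1 ∧
        HasDerivAt (fun y => h p.1 y) dx p.2 ∧ dt = -(1 / 2) * (1 - dx ^ 2)) :
    ∀ t₀ t : ℝ, 0 ≤ t₀ → 0 ≤ t → t₀ + t ≤ T → ∀ x xh : ℝ,
      h t₀ xh + parab t (x - xh) ≤ h (t₀ + t) x ∧ h (t₀ + t) x ≤ h t₀ x := by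
  obtain ⟨K, hK⟩ := hLip
  obtain ⟨G, hG, hGe⟩ := hK.extend_real
  have hGe' : ∀ s ∈ Set.Icc (0 : ℝ) T, ∀ y, h s y = G (s, y) := fun s hs y =>
    hGe (x := (s, y)) ⟨hs, trivial⟩
  -- the derivative of `G` along lines
  have key : ∀ᵐ p : ℝ × ℝ, p ∈ Set.Ioo (0 : ℝ) T ×ˢ (Set.univ : Set ℝ) →
      ∀ L : ℝ × ℝ →L[ℝ] ℝ, HasFDerivAt G L p →
        ∃ dx : ℝ, |dx| ≤ 1 ∧ ∀ v, L (1, v) = -(1 / 2) * (1 - dx ^ 2) + v * dx := by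
    filter_upwards [hPDE] with p hp hpm L hL
    obtain ⟨dt, dx, h1, h2, h3⟩ := hp hpm
    obtain ⟨s, y⟩ := p
    have hs : s ∈ Set.Ioo 0 T := hpm.1
    have hs' : s ∈ Set.Icc 0 T := Set.Ioo_subset_Icc_self hs
    refine ⟨dx, ?_, ?_⟩
    · have := h2.le_of_lipschitz (hSpace s hs')
      simpa using this
    have e1 : L (1, 0) = dt := by
      have hA : HasDerivAt (fun s : ℝ => (s, y)) ((1 : ℝ), (0 : ℝ)) s :=
        (hasDerivAt_id s).prodMk (hasDerivAt_const s y)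
      have hB : HasDerivAt (fun s : ℝ => G (s, y)) (L (1, 0)) s := hL.comp_hasDerivAt s hA
      have hE : (fun s : ℝ => h s y) =ᶠ[nhds s] fun s : ℝ => G (s, y) := by
        filter_upwards [Icc_mem_nhds hs.1 hs.2] with r hr using hGe' r hr y
      exact (hB.congr_of_eventuallyEq hE).unique h1
    have e2 : L (0, 1) = dx := by
      have hA : HasDerivAt (fun y : ℝ => (s, y)) ((0 : ℝ), (1 : ℝ)) y :=
        (hasDerivAt_const y s).prodMk (hasDerivAt_id y)
      have hB : HasDerivAt (fun y : ℝ => G (s, y)) (L (0, 1)) y := hL.comp_hasDerivAt y hA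
      have hE : (fun y : ℝ => h s y) = fun y : ℝ => G (s, y) := funext fun y => hGe' s hs' y
      exact (hE ▸ hB).unique h2
    intro v
    have e3 : ((1 : ℝ), v) = (1, 0) + v • ((0 : ℝ), (1 : ℝ)) := by simp
    rw [e3, map_add, map_smul, e1, e2, h3, smul_eq_mul]
  intro t₀ t ht₀ ht hle
  have m0 : t₀ ∈ Set.Icc 0 T := ⟨ht₀, by linarith⟩
  have m1 : t₀ + t ∈ Set.Icc 0 T := ⟨by linarith, hle⟩
  have lower : ∀ v xh : ℝ, h t₀ xh + (-(1 / 2) - v ^ 2 / 2) * t ≤ h (t₀ + t) (xh + v * t) := by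
    intro v xh
    have := line_ge hG (T := T) (v := v) (c := -(1 / 2) - v ^ 2 / 2) (by
      filter_upwards [key] with p hp hpm L hL
      obtain ⟨dx, _, hv⟩ := hp hpm L hL
      rw [hv]; nlinarith [sq_nonneg (dx + v)]) ht₀ (by linarith : t₀ ≤ t₀ + t) hle
        (xh - v * t₀)
    rw [hGe' _ m0, hGe' _ m1]
    rw [show xh - v * t₀ + v * (t₀ + t) = xh + v * t by ring,
      show xh - v * t₀ + v * t₀ = xh by ring] at this
    linarith
  have space : ∀ y z, h (t₀ + t) y ≤ h (t₀ + t) z + |z - y| := by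
    intro y z
    have := (hSpace _ m1).dist_le_mul y z
    rw [Real.dist_eq, Real.dist_eq, abs_sub_comm y z] at this
    have h2 := le_abs_self (h (t₀ + t) y - h (t₀ + t) z)
    simp only [NNReal.coe_one, one_mul] at this
    linarith
  intro x xh
  constructor
  · unfold parab
    split_ifs with hc
    · have := lower ((x - xh) / t) xh
      have hne := hc.1.ne'
      rw [show xh + (x - xh) / t * t = x by field_simp; ring] at this
      rw [show (-(1 / 2) - ((x - xh) / t) ^ 2 / 2) * t = -t / 2 - (x - xh) ^ 2 / (2 * t) by
        field_simp] at this
      exact this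
    · have hx : t ≤ |x - xh| := by
        rcases ht.eq_or_lt with h0 | h0
        · rw [← h0]; positivity
        · by_contra hcon
          exact hc ⟨h0, (not_le.mp hcon).le⟩
      rcases le_total 0 (x - xh) with hs | hs
      · rw [abs_of_nonneg hs] at hx ⊢
        have h1 := lower 1 xh
        have h2 := space (xh + 1 * t) x
        rw [abs_of_nonneg (by linarith)] at h2
        linarith
      · rw [abs_of_nonpos hs] at hx ⊢
        have h1 := lower (-1) xh
        have h2 := space (xh + (-1) * t) x
        rw [abs_of_nonpos (by linarith)] at h2
        linarith
  · have hneg : LipschitzWith K (fun p => -G p) := hG.neg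
    have := line_ge hneg (T := T) (v := 0) (c := 0) (by
      filter_upwards [key] with p hp hpm L hL
      have hL' : HasFDerivAt G (-L) p := by
        have h0 := hL.neg
        have e : (-fun p => -G p) = G := by funext q; simp
        rwa [e] at h0
      obtain ⟨dx, hdx, hv⟩ := hp hpm _ hL'
      have h0 := hv 0
      have := (sq_le_one_iff_abs_le_one dx).2 hdx
      simp only [neg_apply] at h0
      nlinarith) ht₀ (by linarith : t₀ ≤ t₀ + t) hle x
    rw [hGe' _ m0, hGe' _ m1]
    simp only [zero_mul, add_zero] at this
    linarith
end

section
/- Let r > t > 0 and let f₁, f₂ : ℝ → ℝ be 1-Lipschitz functions with f₁(x) ≤ f₂(x) for all x ∈ [−r, r]. Then (HL_t f₁)(x) ≤ (HL_t f₂)(x) for all x ∈ [−(r−t), r−t]. -/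
/-- The forward Hopf–Lax evolution `(HL_t f)(x) = sup_{x̂} ( p(t, x - x̂) + f(x̂) )`. -/
noncomputable def hopfLax (t : ℝ) (f : ℝ → ℝ) (x : ℝ) : ℝ :=
  ⨆ y : ℝ, (parab t (x - y) + f y)

/-- Localization/comparison property of the Hopf–Lax evolution: if `r > t > 0` and the
`1`-Lipschitz functions `f₁ ≤ f₂` on `[-r, r]`, then `HL_t f₁ ≤ HL_t f₂` on
`[-(r-t), r-t]`. -/
theorem hopfLax_comparison
    (r t : ℝ) (ht : 0 < t) (htr : t < r) (f₁ f₂ : ℝ → ℝ)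
    (h₁ : LipschitzWith 1 f₁) (h₂ : LipschitzWith 1 f₂)
    (hle : ∀ x ∈ Set.Icc (-r) r, f₁ x ≤ f₂ x) :
    ∀ x ∈ Set.Icc (-(r - t)) (r - t), hopfLax t f₁ x ≤ hopfLax t f₂ x := by
  intro x hx
  obtain ⟨hx1, hx2⟩ := hx
  have lip : ∀ f : ℝ → ℝ, LipschitzWith 1 f → ∀ a b, f a ≤ f b + |a - b| := by
    intro f hf a b
    have h := hf.dist_le_mul a b
    simp only [Real.dist_eq, NNReal.coe_one, one_mul] at h
    linarith [le_abs_self (f a - f b)]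
  have hp : ∀ z, parab t z ≤ -|z| := by
    intro z
    unfold parab
    split_ifs with h
    · have e : -t / 2 - z ^ 2 / (2 * t) = -|z| - (|z| - t) ^ 2 / (2 * t) := by
        rw [← sq_abs z]
        field_simp
        ring
      rw [e]
      have : 0 ≤ (|z| - t) ^ 2 / (2 * t) := by positivity
      linarith
    · exact le_rfl
  have hpt : ∀ z, |z| = t → parab t z = -t := by
    intro z hz
    unfold parab
    rw [if_pos ⟨ht, hz.le⟩, ← sq_abs z, hz]
    field_simp
    ring
  have hb : BddAbove (Set.range fun y : ℝ => parab t (x - y) + f₂ y) := by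
    refine ⟨f₂ x, ?_⟩
    rintro _ ⟨y, rfl⟩
    have h3 := lip f₂ h₂ y x
    rw [abs_sub_comm] at h3
    have h4 := hp (x - y)
    simp only
    linarith
  have key : ∀ y, |x - y| ≤ t → parab t (x - y) + f₁ y ≤ hopfLax t f₂ x := by
    intro y hy
    have h5 := abs_le.mp hy
    have h6 := hle y ⟨by linarith, by linarith⟩
    exact le_trans (by linarith) (le_ciSup hb y)
  refine ciSup_le fun y => ?_
  by_cases hy : |x - y| ≤ t
  · exact key y hy
  · push Not at hy
    have h7 := hp (x - y)
    rcases le_total 0 (x - y) with h | h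
    · rw [abs_of_nonneg h] at hy h7
      have e : |x - (x - t)| = t := by rw [sub_sub_cancel, abs_of_pos ht]
      have h8 := key (x - t) e.le
      rw [hpt _ e] at h8
      have h9 := lip f₁ h₁ y (x - t)
      rw [abs_of_nonpos (by linarith)] at h9
      linarith
    · rw [abs_of_nonpos h] at hy h7
      have e : |x - (x + t)| = t := by rw [sub_add_cancel_left, abs_neg, abs_of_pos ht]
      have h8 := key (x + t) e.le
      rw [hpt _ e] at h8
      have h9 := lip f₁ h₁ y (x + t)
      rw [abs_of_nonneg (by linarith)] at h9
      linarith
end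

section
/- Let f, g : ℝ → ℝ be 1-Lipschitz functions, let a < b be real numbers, and let φ : [−1,1] → ℝ be a bounded Borel measurable function. Then ∫_a^b φ(f′(y)) dy + ∫_a^b φ(g′(y)) dy = ∫_a^b φ((f ∨ g)′(y)) dy + ∫_a^b φ((f ∧ g)′(y)) dy, where f ∨ g and f ∧ g denote the pointwise maximum and minimum of f and g (all derivatives exist almost everywhere by Rademacher's theorem and take values in [−1,1], so all four integrals are finite). -/
open MeasureTheory intervalIntegral

/-- If `u ≤ v` touch at `y` and both are differentiable there, the derivatives agree. -/
theorem deriv_eq_of_touch (u v : ℝ → ℝ) (y : ℝ) (hu : DifferentiableAt ℝ u y)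
    (hv : DifferentiableAt ℝ v y) (hle : ∀ z, u z ≤ v z) (hy : u y = v y) :
    deriv u y = deriv v y := by
  have hmin : IsLocalMin (fun z => v z - u z) y := by
    refine Filter.Eventually.of_forall fun z => ?_
    have := hle z
    simp only [hy]
    linarith
  have h0 := hmin.hasDerivAt_eq_zero (hv.hasDerivAt.sub hu.hasDerivAt)
  linarith

theorem lip_integrable (f : ℝ → ℝ) (hf : LipschitzWith 1 f) (a b : ℝ) (φ : ℝ → ℝ)
    (hφm : Measurable φ) (hφb : ∃ C : ℝ, ∀ u ∈ Set.Icc (-1 : ℝ) 1, |φ u| ≤ C) :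
    IntervalIntegrable (fun y => φ (deriv f y)) volume a b := by
  obtain ⟨C, hC⟩ := hφb
  refine (intervalIntegrable_const (c := C)).mono_fun
    (hφm.comp (measurable_deriv f)).aestronglyMeasurable ?_
  refine Filter.Eventually.of_forall fun y => ?_
  have h1 := norm_deriv_le_of_lipschitz (x₀ := y) hf
  rw [Real.norm_eq_abs] at h1
  have h2 := hC (deriv f y) (abs_le.mp (by simpa using h1))
  simp only [Real.norm_eq_abs]
  exact h2.trans (le_abs_self C)

/-- The rewiring identity: for `1`-Lipschitz `f, g : ℝ → ℝ`, `a < b`, and any bounded Borel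
measurable `φ` on `[-1,1]`, the total integral of `φ` of the derivative is conserved by
replacing `f, g` with their pointwise max and min. -/
theorem rewiring_integral_identity
    (f g : ℝ → ℝ) (hf : LipschitzWith 1 f) (hg : LipschitzWith 1 g)
    (a b : ℝ) (hab : a < b) (φ : ℝ → ℝ) (hφm : Measurable φ)
    (hφb : ∃ C : ℝ, ∀ u ∈ Set.Icc (-1 : ℝ) 1, |φ u| ≤ C) :
    (∫ y in a..b, φ (deriv f y)) + (∫ y in a..b, φ (deriv g y)) =
      (∫ y in a..b, φ (deriv (fun z => max (f z) (g z)) y)) +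
        (∫ y in a..b, φ (deriv (fun z => min (f z) (g z)) y)) := by
  have hM : LipschitzWith 1 (fun z => max (f z) (g z)) := by simpa using hf.max hg
  have hm : LipschitzWith 1 (fun z => min (f z) (g z)) := by simpa using hf.min hg
  rw [← integral_add (lip_integrable f hf a b φ hφm hφb) (lip_integrable g hg a b φ hφm hφb),
    ← integral_add (lip_integrable _ hM a b φ hφm hφb) (lip_integrable _ hm a b φ hφm hφb)]
  refine integral_congr_ae ?_
  filter_upwards [hf.ae_differentiableAt_real, hg.ae_differentiableAt_real,
    hM.ae_differentiableAt_real, hm.ae_differentiableAt_real] with y h1 h2 h3 h4 _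
  rcases lt_trichotomy (f y) (g y) with h | h | h
  · have hev : ∀ᶠ z in nhds y, f z < g z :=
      hf.continuous.continuousAt.eventually_lt hg.continuous.continuousAt h
    have e1 : deriv (fun z => max (f z) (g z)) y = deriv g y :=
      Filter.EventuallyEq.deriv_eq (hev.mono fun z hz => max_eq_right hz.le)
    have e2 : deriv (fun z => min (f z) (g z)) y = deriv f y :=
      Filter.EventuallyEq.deriv_eq (hev.mono fun z hz => min_eq_left hz.le)
    rw [e1, e2, add_comm]
  · have e1 := deriv_eq_of_touch f _ y h1 h3 (fun z => le_max_left _ _) (by simp [h])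
    have e2 := deriv_eq_of_touch g _ y h2 h3 (fun z => le_max_right _ _) (by simp [h])
    have e3 := deriv_eq_of_touch _ f y h4 h1 (fun z => min_le_left _ _) (by simp [h])
    rw [e3, e2, ← e1]
  · have hev : ∀ᶠ z in nhds y, g z < f z :=
      hg.continuous.continuousAt.eventually_lt hf.continuous.continuousAt h
    have e1 : deriv (fun z => max (f z) (g z)) y = deriv f y :=
      Filter.EventuallyEq.deriv_eq (hev.mono fun z hz => max_eq_left hz.le)
    have e2 : deriv (fun z => min (f z) (g z)) y = deriv g y :=
      Filter.EventuallyEq.deriv_eq (hev.mono fun z hz => min_eq_right hz.le)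
    rw [e1, e2]
end

section
/- Fix t > 0 and (x̂, â) ∈ ℝ². For every 1-Lipschitz function f : ℝ → ℝ with p_{x̂,â}(t,y) ≤ f(y) ≤ p_{x̂,â}(0,y) for all y ∈ ℝ, the excess entropy satisfies I(f ∥ p_{x̂,â}(t)) ≥ 0, and equality holds if and only if f(y) = p_{x̂,â}(t,y) for all y ∈ ℝ. -/
open MeasureTheory

/-- The shifted parabola `p_{x̂,â}(t,x) = p(t, x - x̂) + â`. -/
noncomputable def parabXA (xh ah t x : ℝ) : ℝ :=
  parab t (x - xh) + ah

/-- The Bernoulli entropy `H(u) = ((1+u)/2)·log(1+u) + ((1-u)/2)·log(1-u)`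
(with `0 · log 0 = 0`, as `Real.log 0 = 0`). -/
noncomputable def Hber (u : ℝ) : ℝ :=
  (1 + u) / 2 * Real.log (1 + u) + (1 - u) / 2 * Real.log (1 - u)

/-- The excess entropy `I(f ∥ p_{x̂,â}(t)) = ∫ ( H(f') - H(∂ₓ p_{x̂,â}(t,·)) )`. -/
noncomputable def excessEntropy (xh ah t : ℝ) (f : ℝ → ℝ) : ℝ :=
  ∫ y : ℝ, (Hber (deriv f y) - Hber (deriv (parabXA xh ah t) y))

open MeasureTheory Set Filter Topology

lemma Hber_continuous : Continuous Hber := by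
  have h := Real.continuous_mul_log
  have h1 : Continuous fun u : ℝ => (1 + u) * Real.log (1 + u) :=
    h.comp (continuous_const.add continuous_id)
  have h2 : Continuous fun u : ℝ => (1 - u) * Real.log (1 - u) :=
    h.comp (continuous_const.sub continuous_id)
  have : Hber = fun u => ((1 + u) * Real.log (1 + u)) / 2 + ((1 - u) * Real.log (1 - u)) / 2 := by
    funext u; unfold Hber; ring
  rw [this]
  exact (h1.div_const 2).add (h2.div_const 2)

lemma mul_log_ge (x y : ℝ) (hx : 0 ≤ x) (hy : 0 < y) :
    x - y ≤ x * Real.log x - x * Real.log y := by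
  rcases hx.eq_or_lt with rfl | hx
  · simp; exact hy.le
  · have h := Real.log_le_sub_one_of_pos (div_pos hy hx)
    rw [Real.log_div hy.ne' hx.ne'] at h
    have h2 := mul_le_mul_of_nonneg_left h hx.le
    have h3 : x * (y / x - 1) = y - x := by field_simp
    rw [h3] at h2
    linarith

lemma Hber_convex (u v : ℝ) (hu : |u| < 1) (hv : |v| ≤ 1) :
    (Real.log (1 + u) - Real.log (1 - u)) / 2 * (v - u) ≤ Hber v - Hber u := by
  rw [abs_lt] at hu
  rw [abs_le] at hv
  have h1 := mul_log_ge (1 + v) (1 + u) (by linarith) (by linarith)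
  have h2 := mul_log_ge (1 - v) (1 - u) (by linarith) (by linarith)
  unfold Hber
  nlinarith

/-- The dual slope `artanh (-y/t)`. -/
noncomputable def slopeA (t y : ℝ) : ℝ := -(Real.log (t + y) - Real.log (t - y)) / 2

lemma slopeA_eq (t y : ℝ) (ht : 0 < t) (hy : |y| < t) :
    slopeA t y = (Real.log (1 + -y / t) - Real.log (1 - -y / t)) / 2 := by
  rw [abs_lt] at hy
  have e1 : 1 + -y / t = (t - y) / t := by field_simp; ring
  have e2 : 1 - -y / t = (t + y) / t := by field_simp; ring
  rw [e1, e2, Real.log_div (by linarith) ht.ne', Real.log_div (by linarith) ht.ne']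
  unfold slopeA; ring

lemma slopeA_hasDeriv (t y : ℝ) (hy : |y| < t) :
    HasDerivAt (slopeA t) (-(1 / (t + y) + 1 / (t - y)) / 2) y := by
  rw [abs_lt] at hy
  have h1 : HasDerivAt (fun y => Real.log (t + y)) (1 / (t + y)) y :=
    ((hasDerivAt_id y).const_add t).log (by simp; linarith)
  have h2 : HasDerivAt (fun y => Real.log (t - y)) (-1 / (t - y)) y :=
    ((hasDerivAt_id y).const_sub t).log (by simp; linarith)
  have := ((h1.sub h2).neg).div_const 2
  refine this.congr_deriv ?_
  ring

lemma slopeA_contDiffOn (t s : ℝ) (hs : s < t) :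
    ContDiffOn ℝ 1 (slopeA t) (Icc (-s) s) := by
  unfold slopeA
  refine ContDiffOn.div_const (ContDiffOn.neg (ContDiffOn.sub ?_ ?_)) 2
  · exact ContDiffOn.log (by fun_prop) (fun y hy => by have := hy.1; linarith)
  · exact ContDiffOn.log (by fun_prop) (fun y hy => by have := hy.2; linarith)

lemma slopeA_neg (t s : ℝ) : slopeA t (-s) = - slopeA t s := by
  unfold slopeA
  rw [← sub_eq_add_neg, sub_neg_eq_add]; ring

lemma slopeA_ge (t s : ℝ) (hs0 : 0 < s) (hs : s < t) : -(t / (t - s)) ≤ slopeA t s := by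
  have h := Real.log_le_sub_one_of_pos (div_pos (by linarith : 0 < t + s) (by linarith : 0 < t - s))
  rw [Real.log_div (by linarith) (by linarith)] at h
  have h2 : (t + s) / (t - s) ≤ 2 * t / (t - s) := by
    exact div_le_div_of_nonneg_right (by linarith) (by linarith)
  have h3 : 2 * t / (t - s) = 2 * (t / (t - s)) := by ring
  unfold slopeA
  linarith

/-- The difference between `f` and the parabola (inside). -/
noncomputable def gapW (t : ℝ) (f : ℝ → ℝ) (y : ℝ) : ℝ := f y + (t / 2 + y ^ 2 / (2 * t))

section core


lemma abs_deriv_le_one (f : ℝ → ℝ) (hf : LipschitzWith 1 f) (y : ℝ) : |deriv f y| ≤ 1 := by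
  have := norm_deriv_le_of_lipschitz (x₀ := y) hf
  simpa using this

lemma Hf_integrable (f : ℝ → ℝ) (hf : LipschitzWith 1 f) (a b : ℝ) :
    IntervalIntegrable (fun y => Hber (deriv f y)) volume a b := by
  obtain ⟨C, hC⟩ := (isCompact_Icc (a := (-1 : ℝ)) (b := 1)).exists_bound_of_continuousOn
    Hber_continuous.continuousOn
  refine (intervalIntegrable_const (c := C)).mono_fun
    ((Hber_continuous.measurable.comp (measurable_deriv f)).aestronglyMeasurable) ?_
  refine Eventually.of_forall fun y => ?_
  refine (hC _ (abs_le.1 (abs_deriv_le_one f hf y))).trans (le_abs_self C)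

lemma D_integrable (t : ℝ) (f : ℝ → ℝ) (hf : LipschitzWith 1 f) (a b : ℝ) :
    IntervalIntegrable (fun y => Hber (deriv f y) - Hber (-y / t)) volume a b :=
  (Hf_integrable f hf a b).sub
    ((Hber_continuous.comp (by fun_prop : Continuous fun y : ℝ => -y / t)).intervalIntegrable a b)

lemma gapW_deriv (t : ℝ) (ht : 0 < t) (f : ℝ → ℝ) (y : ℝ) (h : DifferentiableAt ℝ f y) :
    deriv (gapW t f) y = deriv f y - -y / t := by
  have h2 : HasDerivAt (fun y : ℝ => t / 2 + y ^ 2 / (2 * t)) (y / t) y := by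
    have := ((hasDerivAt_pow 2 y).div_const (2 * t)).const_add (t / 2)
    refine this.congr_deriv ?_
    field_simp
    simp
  have := (h.hasDerivAt.add h2).deriv
  have e : gapW t f = f + (fun y : ℝ => t / 2 + y ^ 2 / (2 * t)) := rfl
  rw [e, this]; ring

lemma gapW_continuous (t : ℝ) (f : ℝ → ℝ) (hf : LipschitzWith 1 f) : Continuous (gapW t f) := by
  unfold gapW
  exact hf.continuous.add (by fun_prop)

lemma core_s (t : ℝ) (ht : 0 < t) (f : ℝ → ℝ) (hf : LipschitzWith 1 f)
    (h0 : ∀ y, |y| ≤ t → 0 ≤ gapW t f y)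
    (h1 : ∀ y, |y| ≤ t → gapW t f y ≤ (t - |y|) ^ 2 / (2 * t))
    (s : ℝ) (hs0 : 0 < s) (hs : s < t) :
    (∫ y in (-s)..s, (1 / t) * gapW t f y) - (t - s) ≤
      ∫ y in (-s)..s, (Hber (deriv f y) - Hber (-y / t)) := by
  have hle : -s ≤ s := by linarith
  have acA : AbsolutelyContinuousOnInterval (slopeA t) (-s) s := by
    apply ContDiffOn.absolutelyContinuousOnInterval
    rw [uIcc_of_le hle]; exact slopeA_contDiffOn t s hs
  have acW : AbsolutelyContinuousOnInterval (gapW t f) (-s) s := by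
    have a1 : AbsolutelyContinuousOnInterval f (-s) s :=
      (hf.lipschitzOnWith (s := uIcc (-s) s)).absolutelyContinuousOnInterval
    have a2 : AbsolutelyContinuousOnInterval (fun y : ℝ => t / 2 + y ^ 2 / (2 * t)) (-s) s :=
      ContDiffOn.absolutelyContinuousOnInterval (by fun_prop)
    exact a1.add a2
  have ibp := acA.integral_mul_deriv_eq_deriv_mul acW
  have m1 : ∫ y in (-s)..s, slopeA t y * deriv (gapW t f) y ≤
      ∫ y in (-s)..s, (Hber (deriv f y) - Hber (-y / t)) := by
    refine intervalIntegral.integral_mono_ae_restrict hle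
      (acW.intervalIntegrable_deriv.continuousOn_mul acA.continuousOn) (D_integrable t f hf _ _) ?_
    rw [EventuallyLE, ae_restrict_iff' measurableSet_Icc]
    filter_upwards [hf.ae_differentiableAt_real] with y hd hy
    have hy' : |y| < t := lt_of_le_of_lt (abs_le.2 hy) hs
    rw [gapW_deriv t ht f y hd, slopeA_eq t y ht hy']
    refine Hber_convex _ _ ?_ (abs_deriv_le_one f hf y)
    rw [abs_div, abs_neg, abs_of_pos ht, div_lt_one ht]; exact hy'
  have m2 : (∫ y in (-s)..s, (1 / t) * gapW t f y) ≤
      ∫ y in (-s)..s, -(deriv (slopeA t) y * gapW t f y) := by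
    refine intervalIntegral.integral_mono_on hle
      (((gapW_continuous t f hf).const_mul _).intervalIntegrable _ _)
      (acA.intervalIntegrable_deriv.mul_continuousOn acW.continuousOn).neg ?_
    intro y hy
    have hy' : |y| < t := lt_of_le_of_lt (abs_le.2 hy) hs
    rw [(slopeA_hasDeriv t y hy').deriv, ← neg_mul]
    refine mul_le_mul_of_nonneg_right ?_ (h0 y hy'.le)
    rw [abs_lt] at hy'
    have p1 : 0 < t + y := by linarith
    have p2 : 0 < t - y := by linarith
    have e : - (-(1 / (t + y) + 1 / (t - y)) / 2) = t / ((t + y) * (t - y)) := by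
      field_simp; ring
    rw [e, div_le_div_iff₀ ht (mul_pos p1 p2)]
    nlinarith [sq_nonneg y]
  rw [intervalIntegral.integral_neg] at m2
  have key : ∀ w : ℝ, 0 ≤ w → w ≤ (t - s) ^ 2 / (2 * t) → -((t - s) / 2) ≤ slopeA t s * w := by
    intro w hw0 hw1
    have p : 0 < t - s := by linarith
    have k1 := mul_le_mul_of_nonneg_right (slopeA_ge t s hs0 hs) hw0
    have k2 : t / (t - s) * w ≤ t / (t - s) * ((t - s) ^ 2 / (2 * t)) := by gcongr
    have k3 : t / (t - s) * ((t - s) ^ 2 / (2 * t)) = (t - s) / 2 := by field_simp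
    linarith
  have abs1 : |s| = s := abs_of_pos hs0
  have abs2 : |-s| = s := by rw [abs_neg, abs1]
  have b1 := key (gapW t f s) (h0 s (by linarith)) (by simpa [abs1] using h1 s (by linarith))
  have b2 := key (gapW t f (-s)) (h0 (-s) (by linarith)) (by simpa [abs1] using h1 (-s) (by linarith))
  rw [slopeA_neg] at ibp
  linarith

lemma sym_tendsto (g : ℝ → ℝ) (hg : ∀ a b, IntervalIntegrable g volume a b) (t : ℝ) :
    Tendsto (fun s => ∫ y in (-s)..s, g y) (𝓝[<] t) (𝓝 (∫ y in (-t)..t, g y)) := by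
  have hc := intervalIntegral.continuous_primitive hg 0
  have e : (fun s => ∫ y in (-s)..s, g y) =
      fun s => (∫ y in (0 : ℝ)..s, g y) - ∫ y in (0 : ℝ)..(-s), g y := by
    funext s
    rw [intervalIntegral.integral_interval_sub_left (hg _ _) (hg _ _)]
  have hc2 : Continuous (fun s => ∫ y in (-s)..s, g y) := by
    rw [e]; exact hc.sub (hc.comp continuous_neg)
  exact (hc2.tendsto t).mono_left nhdsWithin_le_nhds

lemma core (t : ℝ) (ht : 0 < t) (f : ℝ → ℝ) (hf : LipschitzWith 1 f)
    (h0 : ∀ y, |y| ≤ t → 0 ≤ gapW t f y)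
    (h1 : ∀ y, |y| ≤ t → gapW t f y ≤ (t - |y|) ^ 2 / (2 * t)) :
    (∫ y in (-t)..t, (1 / t) * gapW t f y) ≤
      ∫ y in (-t)..t, (Hber (deriv f y) - Hber (-y / t)) := by
  have T1 := sym_tendsto (fun y => (1 / t) * gapW t f y)
    (fun a b => ((gapW_continuous t f hf).const_mul _).intervalIntegrable _ _) t
  have T2 := sym_tendsto (fun y => Hber (deriv f y) - Hber (-y / t)) (D_integrable t f hf) t
  have T3 : Tendsto (fun s => t - s) (𝓝[<] t) (𝓝 0) := by
    have : Tendsto (fun s => t - s) (𝓝 t) (𝓝 (t - t)) := (continuous_const.sub continuous_id).tendsto t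
    rw [sub_self] at this
    exact this.mono_left nhdsWithin_le_nhds
  have T4 := T1.sub T3
  rw [sub_zero] at T4
  refine le_of_tendsto_of_tendsto T4 T2 ?_
  filter_upwards [Ioo_mem_nhdsLT ht] with s hs
  exact core_s t ht f hf h0 h1 s hs.1 hs.2

lemma parab_in (t y : ℝ) (ht : 0 < t) (hy : |y| ≤ t) : parab t y = -(t / 2 + y ^ 2 / (2 * t)) := by
  unfold parab
  rw [if_pos ⟨ht, hy⟩]; ring

lemma parab_out (t y : ℝ) (hy : t < |y|) : parab t y = -|y| := by
  unfold parab
  rw [if_neg (fun h => absurd h.2 (not_le.2 hy))]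

lemma parab_zero (y : ℝ) : parab 0 y = -|y| := by
  unfold parab; simp

lemma integral_reduce (t : ℝ) (ht : 0 < t) (f : ℝ → ℝ)
    (hout : ∀ y, t < |y| → f y = parab t y) :
    (∫ y, (Hber (deriv f y) - Hber (deriv (parab t) y))) =
      ∫ y in (-t)..t, (Hber (deriv f y) - Hber (-y / t)) := by
  rw [intervalIntegral.integral_of_le (by linarith), integral_Ioc_eq_integral_Ioo,
    ← integral_indicator measurableSet_Ioo]
  refine integral_congr_ae ?_
  have n1 : ∀ᵐ y : ℝ, y ≠ t := by simp [ae_iff]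
  have n2 : ∀ᵐ y : ℝ, y ≠ -t := by simp [ae_iff]
  filter_upwards [n1, n2] with y hy1 hy2
  by_cases hy : y ∈ Ioo (-t) t
  · rw [indicator_of_mem hy]
    have : parab t =ᶠ[𝓝 y] fun y => -(t / 2 + y ^ 2 / (2 * t)) := by
      filter_upwards [isOpen_Ioo.mem_nhds hy] with z hz
      exact parab_in t z ht (abs_le.2 ⟨hz.1.le, hz.2.le⟩)
    have h2 : HasDerivAt (fun y : ℝ => -(t / 2 + y ^ 2 / (2 * t))) (-y / t) y := by
      have := (((hasDerivAt_pow 2 y).div_const (2 * t)).const_add (t / 2)).neg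
      refine this.congr_deriv ?_
      field_simp
      simp
    rw [this.deriv_eq, h2.deriv]
  · rw [indicator_of_notMem hy]
    have hlt : t < |y| := by
      by_contra hcon
      have := abs_le.1 (not_lt.1 hcon)
      exact hy ⟨lt_of_le_of_ne this.1 (Ne.symm hy2), lt_of_le_of_ne this.2 hy1⟩
    have : f =ᶠ[𝓝 y] parab t := by
      filter_upwards [(isOpen_lt continuous_const continuous_abs).mem_nhds hlt] with z hz
      exact hout z hz
    rw [this.deriv_eq, sub_self]

lemma centered (t : ℝ) (ht : 0 < t) (f : ℝ → ℝ) (hf : LipschitzWith 1 f)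
    (hb : ∀ y, parab t y ≤ f y ∧ f y ≤ parab 0 y) :
    0 ≤ (∫ y, (Hber (deriv f y) - Hber (deriv (parab t) y))) ∧
      ((∫ y, (Hber (deriv f y) - Hber (deriv (parab t) y))) = 0 → ∀ y, f y = parab t y) := by
  have hout : ∀ y, t < |y| → f y = parab t y := by
    intro y hy
    have := hb y
    rw [parab_zero] at this
    rw [parab_out t y hy] at *
    linarith
  have h0 : ∀ y, |y| ≤ t → 0 ≤ gapW t f y := by
    intro y hy
    have := (hb y).1
    rw [parab_in t y ht hy] at this
    unfold gapW; linarith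
  have h1 : ∀ y, |y| ≤ t → gapW t f y ≤ (t - |y|) ^ 2 / (2 * t) := by
    intro y hy
    have := (hb y).2
    rw [parab_zero] at this
    have e : (t - |y|) ^ 2 / (2 * t) = t / 2 + y ^ 2 / (2 * t) - |y| := by
      rw [← sq_abs y]; field_simp; ring
    unfold gapW; linarith
  rw [integral_reduce t ht f hout]
  have hc := core t ht f hf h0 h1
  have hcont : Continuous fun y => (1 / t) * gapW t f y := (gapW_continuous t f hf).const_mul _
  have hnn : ∀ y ∈ Icc (-t) t, 0 ≤ (1 / t) * gapW t f y := fun y hy =>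
    mul_nonneg (by positivity) (h0 y (abs_le.2 hy))
  have hI := intervalIntegral.integral_nonneg (μ := volume) (by linarith : -t ≤ t) hnn
  refine ⟨hI.trans hc, fun hz => ?_⟩
  intro y
  rcases lt_or_ge t |y| with hy | hy
  · exact hout y hy
  · by_contra hne
    have hpos : 0 < gapW t f y := by
      refine lt_of_le_of_ne (h0 y hy) (fun h => hne ?_)
      rw [parab_in t y ht hy]; unfold gapW at h; linarith
    have := intervalIntegral.integral_pos (by linarith : -t < t) hcont.continuousOn
      (fun z hz => hnn z ⟨hz.1.le, hz.2⟩) ⟨y, abs_le.1 hy, mul_pos (by positivity) hpos⟩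
    linarith

end core

/-- Nonnegativity of the excess entropy, with equality exactly at the parabola itself. -/
theorem excessEntropy_nonneg_and_eq_zero_iff
    (t : ℝ) (ht : 0 < t) (xh ah : ℝ) (f : ℝ → ℝ) (hf : LipschitzWith 1 f)
    (hbound : ∀ y, parabXA xh ah t y ≤ f y ∧ f y ≤ parabXA xh ah 0 y) :
    0 ≤ excessEntropy xh ah t f ∧
      (excessEntropy xh ah t f = 0 ↔ ∀ y, f y = parabXA xh ah t y) := by
  have hlip : LipschitzWith 1 (fun y => f (y + xh) - ah) := by
    refine LipschitzWith.of_dist_le_mul fun a b => ?_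
    have := hf.dist_le_mul (a + xh) (b + xh)
    simpa [Real.dist_eq] using this
  have hb : ∀ y, parab t y ≤ f (y + xh) - ah ∧ f (y + xh) - ah ≤ parab 0 y := by
    intro y
    have := hbound (y + xh)
    simp only [parabXA, add_sub_cancel_right] at this
    constructor <;> linarith
  have hc := centered t ht _ hlip hb
  have hE : excessEntropy xh ah t f =
      ∫ y, (Hber (deriv (fun y => f (y + xh) - ah) y) - Hber (deriv (parab t) y)) := by
    unfold excessEntropy
    rw [← integral_add_right_eq_self _ xh]
    congr 1
    funext y
    have e1 : deriv (fun y => f (y + xh) - ah) y = deriv f (y + xh) := by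
      rw [deriv_sub_const, deriv_comp_add_const]
    have e2 : deriv (parabXA xh ah t) (y + xh) = deriv (parab t) y := by
      have : parabXA xh ah t = fun x => parab t (x - xh) + ah := rfl
      rw [this, deriv_add_const, deriv_comp_sub_const, add_sub_cancel_right]
    rw [e1, e2]
  rw [← hE] at hc
  refine ⟨hc.1, fun h y => ?_, fun h => ?_⟩
  · have := hc.2 h (y - xh)
    simp only [sub_add_cancel] at this
    unfold parabXA
    linarith
  · have : f = parabXA xh ah t := funext h
    rw [this]
    unfold excessEntropy
    simp
end

section
/- Let W be the set of cyclic words over the alphabet {X, Y}, i.e. equivalence classes of nonempty finite words in the two letters X, Y under cyclic rotation. For each integer d ≥ 1 and matrices A, B ∈ Mat_d(ℂ), define ev_{A,B} : W → ℂ by sending the class of a word s₁s₂⋯s_n to tr(M_{s₁}M_{s₂}⋯M_{s_n}), where M_X := A and M_Y := B (this is well defined by cyclic invariance of the trace). Let g be a commutative multivariate polynomial over ℂ whose variables are indexed by W. If for every d ≥ 1 and all A, B ∈ Mat_d(ℂ) the evaluation of g at the family (ev_{A,B}(w))_{w ∈ W} equals 0, then g = 0. -/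
open Matrix

/-- Evaluation of a word in the letters `X = true`, `Y = false` at a pair of matrices,
as the trace of the corresponding product. -/
noncomputable def evList {d : ℕ} (A B : Matrix (Fin d) (Fin d) ℂ) (l : List Bool) : ℂ :=
  Matrix.trace (l.map fun b => if b then A else B).prod

theorem evList_rotate_one {d : ℕ} (A B : Matrix (Fin d) (Fin d) ℂ) (l : List Bool) :
    evList A B (l.rotate 1) = evList A B l := by
  cases l with
  | nil => simp
  | cons a xs =>
    simp only [evList, List.rotate_cons_succ, List.rotate_zero, List.map_append,
      List.map_cons, List.prod_append, List.prod_cons, List.map_nil, List.prod_nil, mul_one]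
    rw [Matrix.trace_mul_comm]

theorem evList_rotated {d : ℕ} (A B : Matrix (Fin d) (Fin d) ℂ) :
    ∀ l l' : List Bool, l ~r l' → evList A B l = evList A B l' := by
  intro l l' hll'
  obtain ⟨n, rfl⟩ := hll'
  induction n generalizing l with
  | zero => simp
  | succ k ih =>
    have : l.rotate (k + 1) = (l.rotate 1).rotate k := by
      rw [List.rotate_rotate, add_comm]
    rw [this, ← ih (l.rotate 1), evList_rotate_one]

/-- Evaluation of a cyclic word over `{X, Y}` at a pair of matrices (well defined by cyclic
invariance of the trace). -/
noncomputable def evCyc {d : ℕ} (A B : Matrix (Fin d) (Fin d) ℂ) (c : Cycle Bool) : ℂ :=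
  Quotient.liftOn c (evList A B) (evList_rotated A B)

/-- Trace of a word at a pair of square matrices with an arbitrary finite index type. -/
noncomputable def trWord {ι : Type} [Fintype ι] [DecidableEq ι] (A B : Matrix ι ι ℂ)
    (l : List Bool) : ℂ :=
  Matrix.trace (l.map fun b => if b then A else B).prod

theorem trWord_fromBlocks {ι κ : Type} [Fintype ι] [DecidableEq ι] [Fintype κ] [DecidableEq κ]
    (A B : Matrix ι ι ℂ) (A' B' : Matrix κ κ ℂ) (l : List Bool) :
    trWord (Matrix.fromBlocks A 0 0 A') (Matrix.fromBlocks B 0 0 B') l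
      = trWord A B l + trWord A' B' l := by
  have h : (l.map fun b => if b then Matrix.fromBlocks A 0 0 A'
      else Matrix.fromBlocks B 0 0 B').prod
      = Matrix.fromBlocks (l.map fun b => if b then A else B).prod 0 0
        (l.map fun b => if b then A' else B').prod := by
    induction l with
    | nil => simp
    | cons b s ih =>
      simp only [List.map_cons, List.prod_cons, ih]
      cases b <;> simp [Matrix.fromBlocks_multiply]
  unfold trWord
  rw [h]
  simp [Matrix.trace, Fintype.sum_sum_type]

theorem trWord_reindex {ι κ : Type} [Fintype ι] [DecidableEq ι] [Fintype κ] [DecidableEq κ]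
    (e : ι ≃ κ) (A B : Matrix ι ι ℂ) (l : List Bool) :
    trWord (A.submatrix e.symm e.symm) (B.submatrix e.symm e.symm) l = trWord A B l := by
  have h : (l.map fun b => if b then A.submatrix e.symm e.symm
      else B.submatrix e.symm e.symm).prod
      = ((l.map fun b : Bool => if b then A else B).prod).submatrix e.symm e.symm := by
    induction l with
    | nil => simp
    | cons b s ih =>
      simp only [List.map_cons, List.prod_cons, ih]
      cases b <;> simp [Matrix.submatrix_mul_equiv]
  unfold trWord
  rw [h]
  simp only [Matrix.trace, Matrix.diag, Matrix.submatrix_apply]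
  exact Equiv.sum_comp e.symm (fun i => (l.map fun b : Bool => if b then A else B).prod i i)

/-- `s` is read along the periodic extension of `l` from position `p`. -/
def ReadAt (l : List Bool) (p : ℕ) (s : List Bool) : Prop :=
  ∀ t (h : t < s.length), s[t] = l.getD ((p + t) % l.length) false

theorem readAt_cons (l : List Bool) (p : ℕ) (hp : p < l.length) (b : Bool) (s : List Bool) :
    ReadAt l p (b :: s) ↔ l.getD p false = b ∧ ReadAt l ((p + 1) % l.length) s := by
  constructor
  · intro h
    refine ⟨?_, ?_⟩
    · have := h 0 (by simp)
      simpa [Nat.mod_eq_of_lt hp] using this.symm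
    · intro t ht
      have := h (t + 1) (by simpa using ht)
      rw [Nat.mod_add_mod, show p + 1 + t = p + (t + 1) by ring, ← this]
      simp
  · rintro ⟨h1, h2⟩ t ht
    cases t with
    | zero => simpa [Nat.mod_eq_of_lt hp] using h1.symm
    | succ t =>
      have := h2 t (by simpa using ht)
      rw [Nat.mod_add_mod, show p + 1 + t = p + (t + 1) by ring] at this
      simpa using this

/-- The cyclic block attached to the word `l`. -/
noncomputable def cycBlock (l : List Bool) (μ : ℂ) (b : Bool) :
    Matrix (Fin l.length) (Fin l.length) ℂ :=
  Matrix.of fun i j => if j.val = (i.val + 1) % l.length ∧ l.getD i.val false = b then μ else 0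

open Classical in
theorem cycBlock_prod (l : List Bool) (μ : ℂ) (s : List Bool) (i j : Fin l.length) :
    (s.map fun b => cycBlock l μ b).prod i j
      = if j.val = (i.val + s.length) % l.length ∧ ReadAt l i.val s then μ ^ s.length else 0 := by
  induction s generalizing i with
  | nil =>
    have : ReadAt l i.val [] := fun t ht => by simp at ht
    simp [this, Matrix.one_apply, Nat.mod_eq_of_lt i.2, Fin.ext_iff, eq_comm]
  | cons b s ih =>
    have hpos : 0 < l.length := lt_of_le_of_lt (Nat.zero_le _) i.2
    simp only [List.map_cons, List.prod_cons, Matrix.mul_apply, ih]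
    rw [Finset.sum_eq_single (⟨(i.val + 1) % l.length, Nat.mod_lt _ hpos⟩ : Fin l.length)]
    · simp only [cycBlock, Matrix.of_apply, readAt_cons l i.val i.2, Nat.mod_add_mod,
        List.length_cons, true_and]
      rw [show i.val + 1 + s.length = i.val + (s.length + 1) by ring]
      by_cases h1 : l.getD i.val false = b
      · by_cases h2 : j.val = (i.val + (s.length + 1)) % l.length ∧
          ReadAt l ((i.val + 1) % l.length) s
        · rw [if_pos h1, if_pos h2, if_pos ⟨h2.1, h1, h2.2⟩, pow_succ']
        · rw [if_neg h2, mul_zero, if_neg (fun h : _ ∧ _ ∧ _ => h2 ⟨h.1, h.2.2⟩)]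
      · rw [if_neg h1, zero_mul, if_neg (fun h : _ ∧ _ ∧ _ => h1 h.2.1)]
    · intro k _ hk
      have : ¬ (k.val = (i.val + 1) % l.length) := fun h => hk (Fin.ext h)
      simp [cycBlock, this]
    · simp

open Classical in
theorem trWord_cycBlock (l : List Bool) (μ : ℂ) (s : List Bool) :
    trWord (cycBlock l μ true) (cycBlock l μ false) s
      = ∑ i : Fin l.length, if i.val = (i.val + s.length) % l.length ∧ ReadAt l i.val s
          then μ ^ s.length else 0 := by
  have : (fun b => if b = true then cycBlock l μ true else cycBlock l μ false)
      = fun b => cycBlock l μ b := by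
    funext b; cases b <;> rfl
  unfold trWord
  rw [this]
  simp only [Matrix.trace, Matrix.diag, cycBlock_prod]

theorem trWord_cycBlock_zero (l : List Bool) (μ : ℂ) (s : List Bool) (hs : s ≠ [])
    (hle : s.length ≤ l.length) (hr : ¬ l ~r s) :
    trWord (cycBlock l μ true) (cycBlock l μ false) s = 0 := by
  classical
  rw [trWord_cycBlock]
  refine Finset.sum_eq_zero fun i _ => if_neg ?_
  rintro ⟨h1, h2⟩
  have hs' : 0 < s.length := List.length_pos_iff.mpr hs
  have hlen : s.length = l.length := by
    by_contra hne
    have hlt : s.length < l.length := lt_of_le_of_ne hle hne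
    have hi := i.2
    rcases lt_or_ge (i.val + s.length) l.length with h | h
    · rw [Nat.mod_eq_of_lt h] at h1; omega
    · rw [Nat.mod_eq_sub_mod h, Nat.mod_eq_of_lt (by omega)] at h1; omega
  refine hr ⟨i.val, ?_⟩
  refine List.ext_getElem (by simp [hlen]) fun t ht ht' => ?_
  rw [h2 t ht', List.getElem_rotate]
  have : (i.val + t) % l.length < l.length := Nat.mod_lt _ (by omega)
  rw [List.getD_eq_getElem _ _ this]
  simp [add_comm]

theorem exists_cycBlock (l : List Bool) (hl : l ≠ []) (x : ℂ) :
    ∃ μ : ℂ, trWord (cycBlock l μ true) (cycBlock l μ false) l = x := by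
  classical
  have hpos : 0 < l.length := List.length_pos_iff.mpr hl
  set c : ℕ := (Finset.univ.filter fun i : Fin l.length =>
    i.val = (i.val + l.length) % l.length ∧ ReadAt l i.val l).card with hc
  have hc0 : (c : ℂ) ≠ 0 := by
    rw [Nat.cast_ne_zero, hc]
    refine Finset.card_ne_zero_of_mem (a := ⟨0, hpos⟩) ?_
    rw [Finset.mem_filter]
    refine ⟨Finset.mem_univ _, by simp, ?_⟩
    intro t ht
    simp [Nat.mod_eq_of_lt ht, ht]
  obtain ⟨μ, hμ⟩ := IsAlgClosed.exists_pow_nat_eq (x / c) hpos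
  refine ⟨μ, ?_⟩
  rw [trWord_cycBlock, ← Finset.sum_filter, Finset.sum_const, ← hc, hμ, nsmul_eq_mul]
  field_simp

/-- All values on finitely many nonempty cyclic words can be prescribed. -/
theorem exists_trWord (S : Finset {c : Cycle Bool // c ≠ Cycle.nil})
    (y : {c : Cycle Bool // c ≠ Cycle.nil} → ℂ) :
    ∃ (ι : Type) (_ : Fintype ι) (_ : DecidableEq ι) (_ : Nonempty ι) (A B : Matrix ι ι ℂ),
      ∀ w ∈ S, ∀ l : List Bool, (l : Cycle Bool) = w.1 → trWord A B l = y w := by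
  classical
  induction S using Finset.induction_on_max_value
    (fun w : {c : Cycle Bool // c ≠ Cycle.nil} => w.1.length) with
  | empty => exact ⟨Fin 1, inferInstance, inferInstance, inferInstance, 0, 0, by simp⟩
  | insert a s ha hmax ih =>
    obtain ⟨ι, i1, i2, i3, A, B, h⟩ := ih
    obtain ⟨⟨c⟩, hcn⟩ := a
    change List Bool at c
    change (c : Cycle Bool) ≠ Cycle.nil at hcn
    have hc : c ≠ [] := fun h => hcn (by rw [h]; rfl)
    have hrot : ∀ (l l' : List Bool), l ~r l' →
        ∀ {κ : Type} [Fintype κ] [DecidableEq κ] (A B : Matrix κ κ ℂ),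
        trWord A B l = trWord A B l' := by
      intro l l' hll κ _ _ A B
      let e := Fintype.equivFin κ
      rw [← trWord_reindex e A B l, ← trWord_reindex e A B l']
      exact evList_rotated _ _ l l' hll
    obtain ⟨μ, hμ⟩ := exists_cycBlock c hc (y ⟨(c : Cycle Bool), hcn⟩ - trWord A B c)
    refine ⟨ι ⊕ Fin c.length, inferInstance, inferInstance, inferInstance,
      Matrix.fromBlocks A 0 0 (cycBlock c μ true), Matrix.fromBlocks B 0 0 (cycBlock c μ false),
      ?_⟩
    intro w hw l hl
    rw [trWord_fromBlocks]
    rcases Finset.mem_insert.mp hw with rfl | hw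
    · have hlc : l ~r c := Cycle.coe_eq_coe.mp hl
      rw [hrot l c hlc, hrot l c hlc, hμ]
      change _ = y ⟨(c : Cycle Bool), hcn⟩
      ring
    · rw [h w hw l hl, trWord_cycBlock_zero, add_zero]
      · rintro rfl
        exact w.2 hl.symm
      · have := hmax w hw
        rw [← hl] at this
        exact this
      · intro hr
        apply ha
        have : w = ⟨(c : Cycle Bool), hcn⟩ :=
          Subtype.ext (hl.symm.trans (Cycle.coe_eq_coe.mpr hr.symm))
        rw [this] at hw
        exact hw

/-- Lemma 5.5 (l.det): faithfulness of traces of words in two matrices. A commutative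
polynomial over `ℂ` in variables indexed by nonempty cyclic words over `{X, Y}` that
vanishes under every evaluation `w ↦ tr(M_{s₁} ⋯ M_{s_n})` (for all sizes `d ≥ 1` and all
matrices `A, B`) is the zero polynomial. -/
theorem trace_word_faithfulness
    (g : MvPolynomial {c : Cycle Bool // c ≠ Cycle.nil} ℂ)
    (hg : ∀ d : ℕ, 1 ≤ d → ∀ A B : Matrix (Fin d) (Fin d) ℂ,
      MvPolynomial.eval (fun w => evCyc A B w.1) g = 0) :
    g = 0 := by
  classical
  apply MvPolynomial.funext
  intro y
  obtain ⟨ι, i1, i2, i3, A, B, h⟩ := exists_trWord g.vars y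
  let e := Fintype.equivFin ι
  have h0 := hg (Fintype.card ι) Fintype.card_pos
    (A.submatrix e.symm e.symm) (B.submatrix e.symm e.symm)
  rw [map_zero, ← h0]
  refine MvPolynomial.eval₂Hom_congr' rfl ?_ rfl
  rintro w hw -
  obtain ⟨⟨c⟩, hcn⟩ := w
  change List Bool at c
  rw [← h _ hw c rfl]
  exact (trWord_reindex e A B c).symm
end

section
/- Let t > 0 and s, d ∈ ℝ, and set x := s − d, a := s + d. Assume p(t,x) < a < −|x| (this forces |x| < t). Then Δ := t² + x² + 2ta > 0 and z⋆ := (t + s − d − √Δ)/t = (t + x − √Δ)/t lies in the open interval (0, 2). Moreover, defining Φ(θ) := s·Log(2 − z⋆e^{iθ}) − d·Log(z⋆e^{iθ}) + (t/2)(1 − z⋆e^{iθ}) for θ ∈ (−π, π), where Log is the principal complex logarithm: Φ′(0) = 0; Φ″(0) is a strictly positive real number; and the function θ ↦ Re Φ(θ) extends continuously to [−π, π], is an even function of θ, and is strictly increasing on [0, π]. -/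
open Real

lemma sd_re (z θ : ℝ) (hz : 0 < z) (s d t : ℝ) :
    ((s : ℂ) * Complex.log (2 - (z : ℂ) * Complex.exp (θ * Complex.I)) -
        (d : ℂ) * Complex.log ((z : ℂ) * Complex.exp (θ * Complex.I)) +
        (t / 2 : ℂ) * (1 - (z : ℂ) * Complex.exp (θ * Complex.I))).re =
    s / 2 * Real.log (4 + z ^ 2 - 4 * z * Real.cos θ) - d * Real.log z
      + t / 2 * (1 - z * Real.cos θ) := by
  have e1 : ‖(2 - (z : ℂ) * Complex.exp (θ * Complex.I))‖
      = Real.sqrt (4 + z ^ 2 - 4 * z * Real.cos θ) := by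
    rw [Complex.norm_def, Complex.normSq_apply]
    congr 1
    simp [Complex.exp_ofReal_mul_I_re, Complex.exp_ofReal_mul_I_im]
    nlinarith [Real.sin_sq_add_cos_sq θ]
  have e2 : ‖((z : ℂ) * Complex.exp (θ * Complex.I))‖ = z := by
    rw [norm_mul, Complex.norm_exp_ofReal_mul_I]
    simp [abs_of_pos hz]
  have e3 : 0 ≤ 4 + z ^ 2 - 4 * z * Real.cos θ := by
    nlinarith [Real.cos_le_one θ, sq_nonneg (2 - z)]
  have e4 : (t / 2 : ℂ) = ((t / 2 : ℝ) : ℂ) := by push_cast; rfl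
  rw [e4, Complex.add_re, Complex.sub_re, Complex.re_ofReal_mul, Complex.re_ofReal_mul,
    Complex.re_ofReal_mul, Complex.log_re, Complex.log_re, e1, e2, Real.log_sqrt e3,
    Complex.sub_re, Complex.re_ofReal_mul, Complex.exp_ofReal_mul_I_re, Complex.one_re]
  ring

lemma sd_hasDeriv (z θ : ℝ) (s d t : ℝ)
    (h1 : (2 - (z : ℂ) * Complex.exp (θ * Complex.I)) ∈ Complex.slitPlane)
    (h2 : ((z : ℂ) * Complex.exp (θ * Complex.I)) ∈ Complex.slitPlane) :
    HasDerivAt (fun θ : ℝ => (s : ℂ) * Complex.log (2 - (z : ℂ) * Complex.exp (θ * Complex.I)) -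
        (d : ℂ) * Complex.log ((z : ℂ) * Complex.exp (θ * Complex.I)) +
        (t / 2 : ℂ) * (1 - (z : ℂ) * Complex.exp (θ * Complex.I)))
      (-s * (z * Complex.exp (θ * Complex.I) * Complex.I) /
          (2 - (z : ℂ) * Complex.exp (θ * Complex.I))
        - d * Complex.I - t / 2 * (z * Complex.exp (θ * Complex.I) * Complex.I)) θ := by
  have hE : HasDerivAt (fun θ : ℝ => (z : ℂ) * Complex.exp (θ * Complex.I))
      (z * Complex.exp (θ * Complex.I) * Complex.I) θ := by
    have := ((((Complex.ofRealCLM.hasDerivAt (x := θ)).mul_const Complex.I).cexp).const_mul (z : ℂ))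
    refine this.congr_deriv ?_
    simp; ring
  have hne : ((z : ℂ) * Complex.exp (θ * Complex.I)) ≠ 0 := Complex.slitPlane_ne_zero h2
  have hne1 := Complex.slitPlane_ne_zero h1
  have := ((((hE.const_sub 2).clog_real h1).const_mul (s : ℂ)).sub
    ((hE.clog_real h2).const_mul (d : ℂ))).add ((hE.const_sub 1).const_mul (t / 2 : ℂ))
  refine this.congr_deriv ?_
  rw [mul_div_cancel_left₀ _ hne]
  ring

lemma sd_hasDeriv2 (z : ℝ) (s d t : ℝ) (h : z < 2) :
    HasDerivAt (fun θ : ℝ => (-s * (z * Complex.exp (θ * Complex.I) * Complex.I) /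
          (2 - (z : ℂ) * Complex.exp (θ * Complex.I))
        - d * Complex.I - t / 2 * (z * Complex.exp (θ * Complex.I) * Complex.I)))
      (((2 * s * z / (2 - z) ^ 2 + t / 2 * z : ℝ)) : ℂ) 0 := by
  have hE : HasDerivAt (fun θ : ℝ => (z : ℂ) * Complex.exp (θ * Complex.I))
      (z * Complex.I) 0 := by
    have := ((((Complex.ofRealCLM.hasDerivAt (x := 0)).mul_const Complex.I).cexp).const_mul (z : ℂ))
    refine this.congr_deriv ?_
    simp
  have hne : (2 : ℂ) - z ≠ 0 := by
    have : ((2 - z : ℝ) : ℂ) ≠ 0 := by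
      rw [Complex.ofReal_ne_zero]; linarith
    simpa using this
  have h1 : (2 - (z : ℂ) * Complex.exp ((0 : ℝ) * Complex.I)) ≠ 0 := by simpa using hne
  have := ((((hE.mul_const Complex.I).const_mul (-s : ℂ)).div (hE.const_sub 2) h1).sub_const
    (d * Complex.I)).sub ((hE.mul_const Complex.I).const_mul (t / 2 : ℂ))
  refine this.congr_deriv ?_
  push_cast
  simp only [Complex.ofReal_zero, zero_mul, Complex.exp_zero, mul_one]
  field_simp
  ring_nf
  simp only [Complex.I_sq]
  ring

/-- Lemma C.1 (l.steep), case `Φ = Φ^◁`: with `x = s − d`, `a = s + d` and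
`p(t,x) < a < −|x|`, the discriminant `Δ = t² + x² + 2ta` is positive, the critical point
`z⋆ = (t + x − √Δ)/t` lies in `(0,2)`, and the exponent
`Φ(θ) = s·Log(2 − z⋆e^{iθ}) − d·Log(z⋆e^{iθ}) + (t/2)(1 − z⋆e^{iθ})` has a critical point
at `θ = 0` with positive second derivative, while `Re Φ` is even, extends continuously to
`[−π, π]`, and is strictly increasing on `[0, π]`. -/
theorem steepest_descent_left (t s d : ℝ) (ht : 0 < t)
    (h1 : parab t (s - d) < s + d) (h2 : s + d < -|s - d|) :
    let Δ : ℝ := t ^ 2 + (s - d) ^ 2 + 2 * t * (s + d)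
    let z : ℝ := (t + (s - d) - Real.sqrt Δ) / t
    let Φ : ℝ → ℂ := fun θ =>
      (s : ℂ) * Complex.log (2 - (z : ℂ) * Complex.exp (θ * Complex.I)) -
        (d : ℂ) * Complex.log ((z : ℂ) * Complex.exp (θ * Complex.I)) +
        (t / 2 : ℂ) * (1 - (z : ℂ) * Complex.exp (θ * Complex.I))
    0 < Δ ∧ z ∈ Set.Ioo (0 : ℝ) 2 ∧
      deriv Φ 0 = 0 ∧
      ((deriv (deriv Φ) 0).im = 0 ∧ 0 < (deriv (deriv Φ) 0).re) ∧
      ContinuousOn (fun θ => (Φ θ).re) (Set.Icc (-π) π) ∧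
      (∀ θ, (Φ (-θ)).re = (Φ θ).re) ∧
      StrictMonoOn (fun θ => (Φ θ).re) (Set.Icc 0 π) := by
  intro Δ z Φ
  have hs : s < 0 := by have := neg_abs_le (s - d); have := le_abs_self (s - d); linarith
  have hd : d < 0 := by have := neg_abs_le (s - d); have := le_abs_self (s - d); linarith
  have hx : |s - d| ≤ t := by
    by_contra hc
    unfold parab at h1
    rw [if_neg (fun h => hc h.2)] at h1
    linarith
  have hΔ : 0 < Δ := by
    unfold parab at h1
    rw [if_pos ⟨ht, hx⟩] at h1
    have e : Δ = 2 * t * ((s + d) - (-t / 2 - (s - d) ^ 2 / (2 * t))) := by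
      simp only [Δ]; field_simp; ring
    rw [e]
    have : 0 < (s + d) - (-t / 2 - (s - d) ^ 2 / (2 * t)) := by linarith
    positivity
  have hr : 0 < Real.sqrt Δ := Real.sqrt_pos.2 hΔ
  have hr2 : Real.sqrt Δ ^ 2 = Δ := Real.sq_sqrt hΔ.le
  have hrlt : Real.sqrt Δ < t + (s - d) := by
    have := neg_abs_le (s - d)
    apply lt_of_pow_lt_pow_left₀ 2 (by linarith)
    rw [hr2]; simp only [Δ]; nlinarith
  have htz : t * z = t + (s - d) - Real.sqrt Δ := by simp only [z]; field_simp
  have hz0 : 0 < z := div_pos (by linarith) ht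
  have hz2 : z < 2 := by
    have := le_abs_self (s - d)
    have : t * z < t * 2 := by linarith
    exact lt_of_mul_lt_mul_left this ht.le
  have hcrit : t * z ^ 2 - 2 * (t + s - d) * z - 4 * d = 0 := by
    have : t * (t * z ^ 2 - 2 * (t + s - d) * z - 4 * d) = 0 := by
      have e : t * (t * z ^ 2 - 2 * (t + s - d) * z - 4 * d)
        = (t * z) ^ 2 - 2 * (t + s - d) * (t * z) - 4 * d * t := by ring
      rw [e, htz]
      have : Real.sqrt Δ ^ 2 = t ^ 2 + (s - d) ^ 2 + 2 * t * (s + d) := hr2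
      linear_combination this
    exact (mul_eq_zero.1 this).resolve_left ht.ne'
  have hkey : -4 * s < t * (2 - z) ^ 2 := by
    have h3 : 0 < t * (2 - z) - (t - (s - d)) := by
      have : t * (2 - z) = 2 * t - t * z := by ring
      linarith
    have := mul_pos (sub_pos.2 hz2) h3
    nlinarith
  have hre : ∀ θ : ℝ, (Φ θ).re = s / 2 * Real.log (4 + z ^ 2 - 4 * z * Real.cos θ)
      - d * Real.log z + t / 2 * (1 - z * Real.cos θ) := fun θ => sd_re z θ hz0 s d t
  have hApos : ∀ θ : ℝ, (2 - z) ^ 2 ≤ 4 + z ^ 2 - 4 * z * Real.cos θ := fun θ => by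
    nlinarith [Real.cos_le_one θ]
  have hw : 0 < (2 - z) ^ 2 := by have := sub_pos.2 hz2; positivity
  have hs1 : ∀ θ : ℝ, (2 - (z : ℂ) * Complex.exp (θ * Complex.I)) ∈ Complex.slitPlane := by
    intro θ
    left
    rw [Complex.sub_re, Complex.re_ofReal_mul, Complex.exp_ofReal_mul_I_re]
    have : (2 : ℂ).re = 2 := rfl
    rw [this]
    nlinarith [Real.cos_le_one θ]
  have hs2 : ∀ᶠ θ : ℝ in nhds 0, ((z : ℂ) * Complex.exp (θ * Complex.I)) ∈ Complex.slitPlane := by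
    have hc : Continuous (fun θ : ℝ => ((z : ℂ) * Complex.exp (θ * Complex.I))) := by fun_prop
    apply hc.continuousAt.eventually_mem
    apply Complex.isOpen_slitPlane.mem_nhds
    left
    simpa using hz0
  have hD := hs2.mono (fun θ h => (sd_hasDeriv z θ s d t (hs1 θ) h).deriv)
  have hne : (2 : ℂ) - z ≠ 0 := by
    have : ((2 - z : ℝ) : ℂ) ≠ 0 := by
      rw [Complex.ofReal_ne_zero]; linarith
    simpa using this
  have hD2 : deriv (deriv Φ) 0 = ((2 * s * z / (2 - z) ^ 2 + t / 2 * z : ℝ) : ℂ) := by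
    rw [Filter.EventuallyEq.deriv_eq hD]
    exact (sd_hasDeriv2 z s d t hz2).deriv
  refine ⟨hΔ, ⟨hz0, hz2⟩, ?_, ?_, ?_, ?_, ?_⟩
  · refine hD.self_of_nhds.trans ?_
    simp only [Complex.ofReal_zero, zero_mul, Complex.exp_zero, mul_one]
    have hc : (t : ℂ) * z ^ 2 - 2 * (t + s - d) * z - 4 * d = 0 := by exact_mod_cast hcrit
    field_simp
    linear_combination Complex.I * hc
  · rw [hD2]
    refine ⟨Complex.ofReal_im _, ?_⟩
    rw [Complex.ofReal_re]
    have : 2 * s * z / (2 - z) ^ 2 + t / 2 * z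
        = z * (4 * s + t * (2 - z) ^ 2) / (2 * (2 - z) ^ 2) := by
      have := hw.ne'
      have : (2 - z) ≠ 0 := by linarith
      field_simp
      ring
    rw [this]
    exact div_pos (mul_pos hz0 (by linarith)) (by positivity)
  · simp only [hre]
    apply Continuous.continuousOn
    have : Continuous (fun θ => Real.log (4 + z ^ 2 - 4 * z * Real.cos θ)) :=
      Continuous.log (by fun_prop) (fun θ => (hw.trans_le (hApos θ)).ne')
    fun_prop
  · intro θ
    rw [hre, hre, Real.cos_neg]
  · intro θ₁ h₁ θ₂ h₂ hlt
    simp only [hre]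
    have hc := Real.strictAntiOn_cos h₁ h₂ hlt
    set c₁ := Real.cos θ₁
    set c₂ := Real.cos θ₂
    have hA1 : (2 - z) ^ 2 ≤ 4 + z ^ 2 - 4 * z * c₁ := hApos θ₁
    have hA2 : (2 - z) ^ 2 ≤ 4 + z ^ 2 - 4 * z * c₂ := hApos θ₂
    have p1 := hw.trans_le hA1
    have p2 := hw.trans_le hA2
    have hl := Real.log_le_sub_one_of_pos (div_pos p2 p1)
    rw [Real.log_div p2.ne' p1.ne'] at hl
    have hzc : 0 < z * (c₁ - c₂) := mul_pos hz0 (sub_pos.2 hc)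
    have e : (4 + z ^ 2 - 4 * z * c₂) / (4 + z ^ 2 - 4 * z * c₁) - 1
        = 4 * (z * (c₁ - c₂)) / (4 + z ^ 2 - 4 * z * c₁) := by
      rw [div_sub_one p1.ne']; congr 1; ring
    have h5 : 4 * (z * (c₁ - c₂)) / (4 + z ^ 2 - 4 * z * c₁)
        ≤ 4 * (z * (c₁ - c₂)) / (2 - z) ^ 2 := by gcongr
    have h6 : -s * (4 * (z * (c₁ - c₂)) / (2 - z) ^ 2) < t * (z * (c₁ - c₂)) := by
      rw [← mul_div_assoc, div_lt_iff₀ hw]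
      nlinarith [mul_pos hzc (sub_pos.2 hkey)]
    have h7 := mul_le_mul_of_nonneg_left (hl.trans (e.le.trans h5)) (neg_pos.2 hs).le
    linarith
end

section
/- Let t > 0 and s, d ∈ ℝ, and set x := s − d, a := s + d. Assume p(t,x) < a < −|x| (this forces |x| < t). Then Δ := t² + x² + 2ta > 0 and z⋆ := (t − s + d − √Δ)/t = (t − x − √Δ)/t lies in the open interval (0, 2). Moreover, defining Φ(θ) := −s·Log(z⋆e^{iθ}) + d·Log(2 − z⋆e^{iθ}) + (t/2)(1 − z⋆e^{iθ}) for θ ∈ (−π, π), where Log is the principal complex logarithm: Φ′(0) = 0; Φ″(0) is a strictly positive real number; and the function θ ↦ Re Φ(θ) extends continuously to [−π, π], is an even function of θ, and is strictly increasing on [0, π]. -/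
open Real

/-- Closed form of the real part of the exponent. -/
theorem sd_re_formula (t s d z : ℝ) (hz : 0 < z) (θ : ℝ) :
    (-((s : ℂ) * Complex.log ((z : ℂ) * Complex.exp (θ * Complex.I))) +
        (d : ℂ) * Complex.log (2 - (z : ℂ) * Complex.exp (θ * Complex.I)) +
        (t / 2 : ℂ) * (1 - (z : ℂ) * Complex.exp (θ * Complex.I))).re =
      -s * Real.log z + d / 2 * Real.log (4 + z ^ 2 - 4 * z * Real.cos θ) +
        t / 2 * (1 - z * Real.cos θ) := by
  have e1 : ‖(z : ℂ) * Complex.exp (θ * Complex.I)‖ = z := by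
    rw [norm_mul, Complex.norm_exp_ofReal_mul_I, Complex.norm_real, mul_one,
      Real.norm_of_nonneg hz.le]
  have e2 : ‖2 - (z : ℂ) * Complex.exp (θ * Complex.I)‖ =
      Real.sqrt (4 + z ^ 2 - 4 * z * Real.cos θ) := by
    rw [Complex.norm_def]
    congr 1
    rw [Complex.normSq_apply]
    simp [Complex.exp_ofReal_mul_I_re, Complex.exp_ofReal_mul_I_im]
    nlinarith [Real.sin_sq_add_cos_sq θ]
  have e4 : (0:ℝ) ≤ 4 + z ^ 2 - 4 * z * Real.cos θ := by
    nlinarith [Real.cos_le_one θ, sq_nonneg (z - 2)]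
  have e3 : ((t : ℂ) / 2) = ((t / 2 : ℝ) : ℂ) := by push_cast; rfl
  rw [e3, Complex.add_re, Complex.add_re, Complex.neg_re, Complex.re_ofReal_mul,
    Complex.re_ofReal_mul, Complex.re_ofReal_mul, Complex.log_re, Complex.log_re, e1, e2,
    Real.log_sqrt e4, Complex.sub_re, Complex.re_ofReal_mul, Complex.exp_ofReal_mul_I_re,
    Complex.one_re]
  ring

theorem sd_u_deriv (z θ : ℝ) : HasDerivAt (fun θ : ℝ => (z : ℂ) * Complex.exp (θ * Complex.I))
    ((z : ℂ) * Complex.exp (θ * Complex.I) * Complex.I) θ := by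
  have h := (((Complex.ofRealCLM.hasDerivAt (x := θ)).mul_const Complex.I).cexp).const_mul (z : ℂ)
  simpa [mul_assoc] using h

theorem sd_slit2 (z θ : ℝ) (hz : 0 < z) (hz2 : z < 2) :
    2 - (z : ℂ) * Complex.exp (θ * Complex.I) ∈ Complex.slitPlane := by
  left
  rw [Complex.sub_re, Complex.re_ofReal_mul, Complex.exp_ofReal_mul_I_re]
  simp only [Complex.re_ofNat]
  nlinarith [Real.cos_le_one θ]

theorem sd_deriv (t s d z θ : ℝ) (hz : 0 < z) (hz2 : z < 2)
    (h : (z : ℂ) * Complex.exp (θ * Complex.I) ∈ Complex.slitPlane) :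
    HasDerivAt (fun θ : ℝ =>
      -((s : ℂ) * Complex.log ((z : ℂ) * Complex.exp (θ * Complex.I))) +
        (d : ℂ) * Complex.log (2 - (z : ℂ) * Complex.exp (θ * Complex.I)) +
        (t / 2 : ℂ) * (1 - (z : ℂ) * Complex.exp (θ * Complex.I)))
      (Complex.I * (-s - d * ((z : ℂ) * Complex.exp (θ * Complex.I)) /
        (2 - (z : ℂ) * Complex.exp (θ * Complex.I))
        - t / 2 * ((z : ℂ) * Complex.exp (θ * Complex.I)))) θ := by
  have hu := sd_u_deriv z θ
  have h2 := sd_slit2 z θ hz hz2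
  have a1 := ((hu.clog_real h).const_mul (s : ℂ)).neg
  have a2 := ((hu.const_sub 2).clog_real h2).const_mul (d : ℂ)
  have a3 := (hu.const_sub 1).const_mul (t / 2 : ℂ)
  refine ((a1.add a2).add a3).congr_deriv ?_
  have n1 := Complex.slitPlane_ne_zero h
  have n2 := Complex.slitPlane_ne_zero h2
  generalize (z : ℂ) * Complex.exp (θ * Complex.I) = u at *
  field_simp
  ring

theorem sd_deriv2 (t s d z : ℝ) (hz : 0 < z) (hz2 : z < 2) :
    HasDerivAt (fun θ : ℝ =>
      (Complex.I * (-s - d * ((z : ℂ) * Complex.exp (θ * Complex.I)) /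
        (2 - (z : ℂ) * Complex.exp (θ * Complex.I))
        - t / 2 * ((z : ℂ) * Complex.exp (θ * Complex.I)))))
      ((z * (2 * d / (2 - z) ^ 2 + t / 2) : ℝ) : ℂ) 0 := by
  have hu := sd_u_deriv z 0
  have h2 := sd_slit2 z 0 hz hz2
  have n2 := Complex.slitPlane_ne_zero h2
  have a2 := ((hu.const_mul (d : ℂ)).div (hu.const_sub 2) n2).const_sub (-(s : ℂ))
  have a3 := ((a2.sub (hu.const_mul (t / 2 : ℂ))).const_mul Complex.I)
  refine a3.congr_deriv ?_
  have e0 : (z : ℂ) * Complex.exp ((0 : ℝ) * Complex.I) = z := by simp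
  rw [e0] at n2 ⊢
  push_cast
  field_simp
  ring_nf
  simp only [Complex.I_sq]
  ring

/-- Lemma C.1 (l.steep), case `Φ = Φ^▷`: with `x = s − d`, `a = s + d` and
`p(t,x) < a < −|x|`, the discriminant `Δ = t² + x² + 2ta` is positive, the critical point
`z⋆ = (t − x − √Δ)/t` lies in `(0,2)`, and the exponent
`Φ(θ) = −s·Log(z⋆e^{iθ}) + d·Log(2 − z⋆e^{iθ}) + (t/2)(1 − z⋆e^{iθ})` has a critical point
at `θ = 0` with positive second derivative, while `Re Φ` is even, extends continuously to
`[−π, π]`, and is strictly increasing on `[0, π]`. -/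
theorem steepest_descent_right (t s d : ℝ) (ht : 0 < t)
    (h1 : parab t (s - d) < s + d) (h2 : s + d < -|s - d|) :
    let Δ : ℝ := t ^ 2 + (s - d) ^ 2 + 2 * t * (s + d)
    let z : ℝ := (t - (s - d) - Real.sqrt Δ) / t
    let Φ : ℝ → ℂ := fun θ =>
      -((s : ℂ) * Complex.log ((z : ℂ) * Complex.exp (θ * Complex.I))) +
        (d : ℂ) * Complex.log (2 - (z : ℂ) * Complex.exp (θ * Complex.I)) +
        (t / 2 : ℂ) * (1 - (z : ℂ) * Complex.exp (θ * Complex.I))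
    0 < Δ ∧ z ∈ Set.Ioo (0 : ℝ) 2 ∧
      deriv Φ 0 = 0 ∧
      ((deriv (deriv Φ) 0).im = 0 ∧ 0 < (deriv (deriv Φ) 0).re) ∧
      ContinuousOn (fun θ => (Φ θ).re) (Set.Icc (-π) π) ∧
      (∀ θ, (Φ (-θ)).re = (Φ θ).re) ∧
      StrictMonoOn (fun θ => (Φ θ).re) (Set.Icc 0 π) := by
  intro Δ z Φ
  have hs : s < 0 := by linarith [le_abs_self (s - d)]
  have hd : d < 0 := by linarith [neg_abs_le (s - d)]
  have hxt : |s - d| ≤ t := by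
    by_contra hc
    rw [parab, if_neg (fun h => hc h.2)] at h1
    linarith
  obtain ⟨hx1, hx2⟩ := abs_le.mp hxt
  have hΔ : 0 < Δ := by
    rw [parab, if_pos ⟨ht, hxt⟩] at h1
    have h3 : (-t / 2 - (s - d) ^ 2 / (2 * t)) * (2 * t) < (s + d) * (2 * t) :=
      mul_lt_mul_of_pos_right h1 (by linarith)
    have h4 : (-t / 2 - (s - d) ^ 2 / (2 * t)) * (2 * t) = -t ^ 2 - (s - d) ^ 2 := by
      field_simp
    simp only [Δ]
    linarith
  obtain ⟨r, hr⟩ : ∃ r, r = Real.sqrt Δ := ⟨_, rfl⟩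
  have hr0 : 0 < r := hr ▸ Real.sqrt_pos.mpr hΔ
  have hrr : r ^ 2 = t ^ 2 + (s - d) ^ 2 + 2 * t * (s + d) := by
    rw [hr, Real.sq_sqrt hΔ.le]
  have htz : t * z = t - (s - d) - r := by
    simp only [z, hr]
    field_simp
  clear_value z
  have hts : t * s < 0 := mul_neg_of_pos_of_neg ht hs
  have hz : 0 < z := by
    have : r < t - (s - d) := by
      apply lt_of_pow_lt_pow_left₀ 2 (by linarith)
      nlinarith
    by_contra hc
    nlinarith
  have hz2 : z < 2 := by
    by_contra hc
    nlinarith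
  have hw : 0 < 2 - z := by linarith
  have htw : t * (2 - z) = t + (s - d) + r := by linarith
  have key : -4 * d < t * (2 - z) ^ 2 := by
    have h5 : t * (-4 * d) < t * (t * (2 - z) ^ 2) := by
      have : t * (t * (2 - z) ^ 2) = (t + (s - d) + r) ^ 2 := by rw [← htw]; ring
      rw [this]
      nlinarith [mul_nonneg (by linarith : 0 ≤ t + (s - d)) hr0.le]
    exact lt_of_mul_lt_mul_left h5 ht.le
  have crit : -s - d * z / (2 - z) - t / 2 * z = 0 := by
    have : t * (-2 * s * (2 - z) - 2 * d * z - t * z * (2 - z)) = 0 := by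
      have : t * (-2 * s * (2 - z) - 2 * d * z - t * z * (2 - z)) =
        -2 * s * (t * (2 - z)) - 2 * d * (t * z) - (t * z) * (t * (2 - z)) := by ring
      rw [this, htw, htz]
      nlinarith
    have h6 := (mul_eq_zero.mp this).resolve_left ht.ne'
    field_simp
    linarith
  have hev : ∀ᶠ θ : ℝ in nhds 0,
      (z : ℂ) * Complex.exp (θ * Complex.I) ∈ Complex.slitPlane := by
    apply (sd_u_deriv z 0).continuousAt.eventually_mem
    apply Complex.isOpen_slitPlane.mem_nhds
    left
    simpa using hz
  have hform : ∀ θ, (Φ θ).re = -s * Real.log z +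
      d / 2 * Real.log (4 + z ^ 2 - 4 * z * Real.cos θ) + t / 2 * (1 - z * Real.cos θ) :=
    fun θ => sd_re_formula t s d z hz θ
  have hB : ∀ θ, (2 - z) ^ 2 ≤ 4 + z ^ 2 - 4 * z * Real.cos θ := fun θ => by
    nlinarith [Real.cos_le_one θ]
  have hw2 : 0 < (2 - z) ^ 2 := by positivity
  have hdd : deriv (deriv Φ) 0 = ((z * (2 * d / (2 - z) ^ 2 + t / 2) : ℝ) : ℂ) := by
    have he : deriv Φ =ᶠ[nhds 0] _ := hev.mono fun θ h => (sd_deriv t s d z θ hz hz2 h).deriv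
    rw [he.deriv_eq]
    exact (sd_deriv2 t s d z hz hz2).deriv
  refine ⟨hΔ, ⟨hz, hz2⟩, ?_, ?_, ?_, ?_, ?_⟩
  · rw [(sd_deriv t s d z 0 hz hz2 hev.self_of_nhds).deriv]
    have e0 : (z : ℂ) * Complex.exp ((0 : ℝ) * Complex.I) = z := by simp
    rw [e0]
    have : (-s - d * z / (2 - z) - t / 2 * z : ℂ) = 0 := by exact_mod_cast congrArg Complex.ofReal crit
    rw [this, mul_zero]
  · rw [hdd]
    refine ⟨Complex.ofReal_im _, ?_⟩
    rw [Complex.ofReal_re]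
    apply mul_pos hz
    have : 2 * d / (2 - z) ^ 2 + t / 2 = (4 * d + t * (2 - z) ^ 2) / (2 * (2 - z) ^ 2) := by
      field_simp
      ring
    rw [this]
    apply div_pos <;> linarith
  · apply Continuous.continuousOn
    simp only [hform]
    have : Continuous fun θ : ℝ => Real.log (4 + z ^ 2 - 4 * z * Real.cos θ) :=
      Continuous.log (by fun_prop) fun θ => (hw2.trans_le (hB θ)).ne'
    fun_prop
  · intro θ
    rw [hform, hform, Real.cos_neg]
  · intro α hα β hβ hαβ
    have hc := Real.strictAntiOn_cos hα hβ hαβ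
    simp only [hform]
    have b1 := hB α
    have p1 : 0 < 4 + z ^ 2 - 4 * z * Real.cos α := hw2.trans_le b1
    have p2 : 0 < 4 + z ^ 2 - 4 * z * Real.cos β := hw2.trans_le (hB β)
    have hl := Real.log_le_sub_one_of_pos (div_pos p2 p1)
    rw [Real.log_div p2.ne' p1.ne'] at hl
    set B1 := 4 + z ^ 2 - 4 * z * Real.cos α with hB1
    set B2 := 4 + z ^ 2 - 4 * z * Real.cos β with hB2
    have hq : B2 / B1 - 1 = 4 * (z * (Real.cos α - Real.cos β)) / B1 := by
      field_simp
      rw [hB1, hB2]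
      ring
    have hpos : 0 < z * (Real.cos α - Real.cos β) := mul_pos hz (by linarith)
    have hk : -4 * d / B1 < t := by
      rw [div_lt_iff₀ p1]
      nlinarith
    have h7 : d / 2 * (4 * (z * (Real.cos α - Real.cos β)) / B1) ≤
        d / 2 * (Real.log B2 - Real.log B1) :=
      mul_le_mul_of_nonpos_left (hq ▸ hl) (by linarith)
    have h8 : d / 2 * (4 * (z * (Real.cos α - Real.cos β)) / B1) =
      -(1 / 2) * ((-4 * d / B1) * (z * (Real.cos α - Real.cos β))) := by ring
    have h9 := mul_lt_mul_of_pos_right hk hpos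
    nlinarith
end

section
/- Let s > 0 and d > 0, and set z⋆ := 2d/(s + d), which lies in the open interval (0, 2). Define Φ(θ) := s·Log(2 − z⋆e^{iθ}) + d·Log(z⋆e^{iθ}) for θ ∈ (−π, π), where Log is the principal complex logarithm. Then: Φ′(0) = 0; Φ″(0) is a strictly positive real number; and the function θ ↦ Re Φ(θ) extends continuously to [−π, π], is an even function of θ, and is strictly increasing on [0, π]. -/
open Real

/-- Lemma C.1 (l.steep), random-walk case: the exponent
`Φ(θ) = s·Log(2 − z⋆e^{iθ}) + d·Log(z⋆e^{iθ})` with `z⋆ = 2d/(s+d)` has a critical point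
at `θ = 0` with positive second derivative, and `Re Φ` is even, extends continuously to
`[−π, π]`, and is strictly increasing on `[0, π]`. -/
theorem steepest_descent_rw (s d : ℝ) (hs : 0 < s) (hd : 0 < d) :
    let z : ℝ := 2 * d / (s + d)
    let Φ : ℝ → ℂ := fun θ =>
      (s : ℂ) * Complex.log (2 - (z : ℂ) * Complex.exp (θ * Complex.I)) +
        (d : ℂ) * Complex.log ((z : ℂ) * Complex.exp (θ * Complex.I))
    z ∈ Set.Ioo (0 : ℝ) 2 ∧
      deriv Φ 0 = 0 ∧
      ((deriv (deriv Φ) 0).im = 0 ∧ 0 < (deriv (deriv Φ) 0).re) ∧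
      ContinuousOn (fun θ => (Φ θ).re) (Set.Icc (-π) π) ∧
      (∀ θ, (Φ (-θ)).re = (Φ θ).re) ∧
      StrictMonoOn (fun θ => (Φ θ).re) (Set.Icc 0 π) := by
  intro z Φ
  have hsd : 0 < s + d := by positivity
  have hz0 : 0 < z := by positivity
  have hz2 : z < 2 := by
    show 2 * d / (s + d) < 2
    rw [div_lt_iff₀ hsd]; linarith
  have hzeq : z * (s + d) = 2 * d := by
    show 2 * d / (s + d) * (s + d) = 2 * d
    field_simp
  have hre : ∀ θ : ℝ, ((z : ℂ) * Complex.exp (θ * Complex.I)).re = z * cos θ := by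
    intro θ
    rw [Complex.re_ofReal_mul, Complex.exp_ofReal_mul_I_re]
  have him : ∀ θ : ℝ, ((z : ℂ) * Complex.exp (θ * Complex.I)).im = z * sin θ := by
    intro θ
    rw [Complex.im_ofReal_mul, Complex.exp_ofReal_mul_I_im]
  have hpos : ∀ θ : ℝ, 0 < 4 + z ^ 2 - 4 * z * cos θ := by
    intro θ
    nlinarith [cos_le_one θ, mul_pos (sub_pos.2 hz2) (sub_pos.2 hz2)]
  have hΦre : ∀ θ : ℝ, (Φ θ).re =
      s * (Real.log (4 + z ^ 2 - 4 * z * cos θ) / 2) + d * Real.log z := by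
    intro θ
    have h1 : ‖(2 : ℂ) - (z : ℂ) * Complex.exp (θ * Complex.I)‖
        = √(4 + z ^ 2 - 4 * z * cos θ) := by
      rw [Complex.norm_def, Complex.normSq_apply, Complex.sub_re, Complex.sub_im, hre, him]
      congr 1
      simp only [Complex.re_ofNat, Complex.im_ofNat]
      nlinarith [sin_sq_add_cos_sq θ]
    have h2 : ‖(z : ℂ) * Complex.exp (θ * Complex.I)‖ = z := by
      rw [norm_mul, Complex.norm_exp_ofReal_mul_I, mul_one, Complex.norm_real,
        Real.norm_of_nonneg hz0.le]
    simp only [Φ]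
    rw [Complex.add_re, Complex.re_ofReal_mul, Complex.re_ofReal_mul, Complex.log_re,
      Complex.log_re, h1, h2, Real.log_sqrt (hpos θ).le]
  have hw : ∀ θ : ℝ, HasDerivAt (fun θ : ℝ => (z : ℂ) * Complex.exp (θ * Complex.I))
      ((z : ℂ) * Complex.exp (θ * Complex.I) * Complex.I) θ := by
    intro θ
    have h := (((Complex.ofRealCLM.hasDerivAt (x := θ)).mul_const Complex.I).cexp).const_mul (z : ℂ)
    simpa [mul_assoc] using h
  have hslit : ∀ θ : ℝ, (2 : ℂ) - (z : ℂ) * Complex.exp (θ * Complex.I) ∈ Complex.slitPlane := by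
    intro θ
    left
    rw [Complex.sub_re, hre]
    simp only [Complex.re_ofNat]
    nlinarith [cos_le_one θ]
  have hD : ∀ θ ∈ Set.Ioo (-(π / 2)) (π / 2), HasDerivAt Φ
      ((d : ℂ) * Complex.I - (s : ℂ) * ((z : ℂ) * Complex.exp (θ * Complex.I) * Complex.I /
        (2 - (z : ℂ) * Complex.exp (θ * Complex.I)))) θ := by
    intro θ hθ
    have hc : (z : ℂ) * Complex.exp (θ * Complex.I) ∈ Complex.slitPlane := by
      left
      rw [hre]
      exact mul_pos hz0 (cos_pos_of_mem_Ioo hθ)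
    have h := ((((hw θ).const_sub 2).clog_real (hslit θ)).const_mul (s : ℂ)).add
      (((hw θ).clog_real hc).const_mul (d : ℂ))
    refine h.congr_deriv ?_
    have := Complex.slitPlane_ne_zero hc
    rw [mul_div_cancel_left₀ _ this]
    ring
  have h0 : (0 : ℝ) ∈ Set.Ioo (-(π / 2)) (π / 2) := by
    constructor <;> linarith [pi_pos]
  have hzc : (z : ℂ) * (s + d) = 2 * d := by exact_mod_cast hzeq
  have hne : (2 : ℂ) - z ≠ 0 := by
    have : (2 : ℝ) - z ≠ 0 := by linarith
    exact_mod_cast this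
  have hD2 : deriv (deriv Φ) 0 = ((2 * s * z / (2 - z) ^ 2 : ℝ) : ℂ) := by
    have he : deriv Φ =ᶠ[nhds 0] fun θ : ℝ => (d : ℂ) * Complex.I - (s : ℂ) *
        ((z : ℂ) * Complex.exp (θ * Complex.I) * Complex.I /
        (2 - (z : ℂ) * Complex.exp (θ * Complex.I))) := by
      filter_upwards [isOpen_Ioo.mem_nhds h0] with θ hθ using (hD θ hθ).deriv
    rw [he.deriv_eq]
    have h := ((((hw 0).mul_const Complex.I).div ((hw 0).const_sub 2)
      (Complex.slitPlane_ne_zero (hslit 0))).const_mul (s : ℂ)).const_sub ((d : ℂ) * Complex.I)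
    refine h.deriv.trans ?_
    simp only [Complex.ofReal_zero, zero_mul, Complex.exp_zero, mul_one]
    push_cast
    field_simp
    linear_combination (-2 * (s : ℂ) * z) * Complex.I_sq
  refine ⟨⟨hz0, hz2⟩, ?_, ?_, ?_, ?_, ?_⟩
  · rw [(hD 0 h0).deriv]
    simp only [Complex.ofReal_zero, zero_mul, Complex.exp_zero, mul_one]
    field_simp
    linear_combination (-Complex.I) * hzc
  · rw [hD2, Complex.ofReal_im, Complex.ofReal_re]
    have : 0 < 2 - z := by linarith
    exact ⟨rfl, by positivity⟩
  · simp only [hΦre]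
    apply Continuous.continuousOn
    have : Continuous fun θ : ℝ => Real.log (4 + z ^ 2 - 4 * z * cos θ) :=
      Continuous.log (by fun_prop) (fun θ => (hpos θ).ne')
    fun_prop
  · intro θ
    rw [hΦre, hΦre, cos_neg]
  · intro a ha b hb hab
    simp only [hΦre]
    have hc := strictAntiOn_cos ha hb hab
    have hl := Real.log_lt_log (hpos a)
      (show 4 + z ^ 2 - 4 * z * cos a < 4 + z ^ 2 - 4 * z * cos b by nlinarith)
    nlinarith
end
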